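/- arXiv:2201.04264 — 4 statements merged into one kernel-verified Lean document; each statement's English description precedes it below -/
import Mathlib

section
/- Let z* ∈ X. Suppose there exists d* ∈ E such that d* minimizes d ↦ ∇g(z*)·d over the cone T(z*) = {d ∈ E : gᵢ(z*) + ∇gᵢ(z*)·d ≤ 0 for all i = 1,…,s and ∇hⱼ(z*)·d ≤ 0 for all j = 1,…,r}, and that ∇g(z*)·d* ≥ 0. Then (a) g(z*) ≤ g(z) for every z ∈ X, and (b) there exist multipliers u* ∈ ℝ^s with u* ≥ 0 and v* ∈ ℝ^r with v* ≥ 0 such that ∇g(z*) + Σᵢ uᵢ* ∇gᵢ(z*) + Σⱼ vⱼ* ∇hⱼ(z*) = 0 (as linear functionals on E) and uᵢ* gᵢ(z*) = 0 for every i = 1,…,s. -/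
/-!
The tangent inequality puts `z - zs` in the linearized cone for every feasible `z`, so nonnegativity
of the linearized objective there gives `0 ≤ g' (z - zs) ≤ g z - g zs`. The multipliers come from
Farkas' lemma for affine inequalities: if `b i + a i d ≤ 0` for all `i` forces `0 ≤ c d`, then
`c = -∑ i, u i • a i` with `u ≥ 0` and `0 ≤ ∑ i, u i * b i`. At a feasible point every `b i` is
nonpositive, so each term of the last sum vanishes, which is complementary slackness.
-/

section Farkas

variable {𝕜 V ι : Type*} [Field 𝕜] [AddCommGroup V] [Module 𝕜 V]

theorem exists_smul_eq_of_ker_le_ker {f k : V →ₗ[𝕜] 𝕜}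
    (hk : LinearMap.ker f ≤ LinearMap.ker k) : ∃ c : 𝕜, c • f = k := by
  have hmem : k ∈ Submodule.span 𝕜 (Set.range fun _ : Unit => f) :=
    mem_span_of_iInf_ker_le_ker (by simpa only [ciInf_const] using hk)
  rwa [Set.range_const, Submodule.mem_span_singleton] at hmem

variable [LinearOrder 𝕜] [IsStrictOrderedRing 𝕜]

/-- **Farkas' lemma**. -/
theorem exists_nonneg_sum_smul_eq_of_forall_nonpos (t : Finset ι) (a : ι → V →ₗ[𝕜] 𝕜)
    (b : V →ₗ[𝕜] 𝕜) (h : ∀ x, (∀ i ∈ t, a i x ≤ 0) → b x ≤ 0) :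
    ∃ u : ι → 𝕜, (∀ i, 0 ≤ u i) ∧ ∑ i ∈ t, u i • a i = b := by
  classical
  induction t using Finset.induction_on generalizing V with
  | empty =>
    have b_nonpos (x : V) : b x ≤ 0 := h x (by simp)
    refine ⟨0, fun _ => le_rfl, LinearMap.ext fun x => le_antisymm ?_ (b_nonpos x)⟩
    simpa using b_nonpos (-x)
  | insert m t hm ih =>
    suffices ∃ (c : 𝕜) (u : ι → 𝕜), 0 ≤ c ∧ (∀ i, 0 ≤ u i) ∧
        c • a m + ∑ i ∈ t, u i • a i = b by
      obtain ⟨c, u, hc, hu, hsum⟩ := this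
      refine ⟨Function.update u m c, fun i => ?_, ?_⟩
      · rcases eq_or_ne i m with rfl | hi <;> simp [*]
      · rw [Finset.sum_insert hm, Function.update_self, ← hsum]
        refine congrArg _ (Finset.sum_congr rfl fun i hi => ?_)
        rw [Function.update_of_ne (ne_of_mem_of_not_mem hi hm)]
    by_cases hb : ∀ x, (∀ i ∈ t, a i x ≤ 0) → b x ≤ 0
    · obtain ⟨u, hu, hsum⟩ := ih a b hb
      exact ⟨0, u, le_rfl, hu, by rw [zero_smul, zero_add, hsum]⟩
    push Not at hb
    obtain ⟨y, hay, hby⟩ := hb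
    have hmy : 0 < a m y := by
      by_contra! hmy
      exact hby.not_ge (h y (by simpa [hmy] using hay))
    -- On `ker (a m)` the constraint `m` is void, so the induction hypothesis applies there;
    -- evaluating at `y` then gives the sign of the coefficient of `a m`.
    obtain ⟨u, hu, hsum⟩ := ih (fun i => (a i).domRestrict (LinearMap.ker (a m)))
      (b.domRestrict (LinearMap.ker (a m))) fun x hx => h x (by simpa using hx)
    obtain ⟨c, hc⟩ := exists_smul_eq_of_ker_le_ker (f := a m) (k := b - ∑ i ∈ t, u i • a i)
      fun x hx => by
        simpa [sub_eq_zero] using (LinearMap.congr_fun hsum ⟨x, hx⟩).symm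
    have hcy : c * a m y = b y - ∑ i ∈ t, u i * a i y := by
      simpa using LinearMap.congr_fun hc y
    have hsum_nonpos : ∑ i ∈ t, u i * a i y ≤ 0 :=
      Finset.sum_nonpos fun i hi => mul_nonpos_of_nonneg_of_nonpos (hu i) (hay i hi)
    have hc_nonneg : 0 ≤ c := nonneg_of_mul_nonneg_left (by linarith) hmy
    exact ⟨c, u, hc_nonneg, hu, by rw [hc, sub_add_cancel]⟩

theorem nonpos_of_forall_affine_le {a : ι → V →ₗ[𝕜] 𝕜} {b : ι → 𝕜} {c : V →ₗ[𝕜] 𝕜} {γ : 𝕜}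
    {x₀ : V} (hx₀ : ∀ i, b i + a i x₀ ≤ 0) (h : ∀ x, (∀ i, b i + a i x ≤ 0) → c x ≤ γ)
    {x : V} (hx : ∀ i, a i x ≤ 0) : c x ≤ 0 := by
  by_contra! hcx
  -- This step from `x₀` along `x` brings `c` to the value `γ + 1`.
  have hstep : 0 ≤ (γ - c x₀ + 1) / c x := div_nonneg (by linarith [h x₀ hx₀]) hcx.le
  have hγ := h (x₀ + ((γ - c x₀ + 1) / c x) • x) fun i => by
    rw [map_add, map_smul, smul_eq_mul, ← add_assoc]
    exact add_nonpos (hx₀ i) (mul_nonpos_of_nonneg_of_nonpos hstep (hx i))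
  rw [map_add, map_smul, smul_eq_mul, div_mul_cancel₀ _ hcx.ne'] at hγ
  linarith

theorem apply_le_mul_of_forall_affine_le {a : ι → V →ₗ[𝕜] 𝕜} {b : ι → 𝕜} {c : V →ₗ[𝕜] 𝕜} {γ : 𝕜}
    {x₀ : V} (hx₀ : ∀ i, b i + a i x₀ ≤ 0) (h : ∀ x, (∀ i, b i + a i x ≤ 0) → c x ≤ γ)
    {τ : 𝕜} (hτ : 0 ≤ τ) {x : V} (hx : ∀ i, τ * b i + a i x ≤ 0) : c x ≤ τ * γ := by
  rcases hτ.eq_or_lt with rfl | hτ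
  · simpa using nonpos_of_forall_affine_le hx₀ h (by simpa using hx)
  · have hscaled : c (τ⁻¹ • x) ≤ γ := h _ fun i => by
      have hfactor : b i + a i (τ⁻¹ • x) = τ⁻¹ * (τ * b i + a i x) := by
        rw [map_smul, smul_eq_mul, mul_add, inv_mul_cancel_left₀ hτ.ne']
      rw [hfactor]
      exact mul_nonpos_of_nonneg_of_nonpos (inv_nonneg.mpr hτ.le) (hx i)
    rwa [map_smul, smul_eq_mul, inv_mul_le_iff₀ hτ] at hscaled

variable [Fintype ι]

/-- The affine **Farkas' lemma**, reduced to the linear one on `V × 𝕜` by homogenization. -/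
theorem exists_nonneg_sum_smul_eq_of_forall_affine_le (a : ι → V →ₗ[𝕜] 𝕜) (b : ι → 𝕜)
    (c : V →ₗ[𝕜] 𝕜) (γ : 𝕜) {x₀ : V} (hx₀ : ∀ i, b i + a i x₀ ≤ 0)
    (h : ∀ x, (∀ i, b i + a i x ≤ 0) → c x ≤ γ) :
    ∃ u : ι → 𝕜, (∀ i, 0 ≤ u i) ∧ ∑ i, u i • a i = c ∧ -∑ i, u i * b i ≤ γ := by
  let homog (f : V →ₗ[𝕜] 𝕜) (β : 𝕜) : V × 𝕜 →ₗ[𝕜] 𝕜 :=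
    f.coprod (LinearMap.toSpanSingleton 𝕜 𝕜 β)
  have homog_apply (f β x τ) : homog f β (x, τ) = f x + τ * β := by simp [homog]
  -- `none` indexes the constraint `0 ≤ τ` on the homogenizing variable.
  let constraint (o : Option ι) : V × 𝕜 →ₗ[𝕜] 𝕜 := o.elim (homog 0 (-1)) fun i => homog (a i) (b i)
  have hhomog (p : V × 𝕜) (hp : ∀ o ∈ Finset.univ, constraint o p ≤ 0) : homog c (-γ) p ≤ 0 := by
    obtain ⟨x, τ⟩ := p
    have hτ : 0 ≤ τ := by simpa [constraint, homog_apply] using hp none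
    have hx (i : ι) : τ * b i + a i x ≤ 0 := by
      simpa [constraint, homog_apply, add_comm] using hp (some i)
    simpa [homog_apply] using apply_le_mul_of_forall_affine_le hx₀ h hτ hx
  obtain ⟨w, hw, hsum⟩ :=
    exists_nonneg_sum_smul_eq_of_forall_nonpos Finset.univ constraint (homog c (-γ)) hhomog
  have hsum_apply (x : V) (τ : 𝕜) :
      -(w none * τ) + ∑ i, w (some i) * (a i x + τ * b i) = c x - τ * γ := by
    simpa [constraint, homog_apply, Fintype.sum_option, sub_eq_add_neg]
      using LinearMap.congr_fun hsum (x, τ)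
  refine ⟨fun i => w (some i), fun i => hw _, ?_, ?_⟩
  · ext x
    simpa using hsum_apply x 0
  · have hconst : -w none + ∑ i, w (some i) * b i = -γ := by simpa using hsum_apply 0 1
    linarith [hw none]

theorem exists_complementary_multipliers {a : ι → V →ₗ[𝕜] 𝕜} {b : ι → 𝕜} {c : V →ₗ[𝕜] 𝕜}
    (hb : ∀ i, b i ≤ 0) (h : ∀ d, (∀ i, b i + a i d ≤ 0) → 0 ≤ c d) :
    ∃ u : ι → 𝕜, (∀ i, 0 ≤ u i) ∧ c + ∑ i, u i • a i = 0 ∧ ∀ i, u i * b i = 0 := by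
  obtain ⟨u, hu, hsum, hslack⟩ := exists_nonneg_sum_smul_eq_of_forall_affine_le a b (-c) 0
    (x₀ := 0) (by simpa using hb) (by simpa using h)
  have hterm (i : ι) : u i * b i ≤ 0 := mul_nonpos_of_nonneg_of_nonpos (hu i) (hb i)
  have hsum_zero : ∑ i, u i * b i = 0 :=
    le_antisymm (Finset.sum_nonpos fun i _ => hterm i) (neg_nonpos.mp hslack)
  refine ⟨u, hu, by rw [hsum, add_neg_cancel], fun i => ?_⟩
  exact (Finset.sum_eq_zero_iff_of_nonpos fun i _ => hterm i).mp hsum_zero i (Finset.mem_univ i)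

end Farkas

section Convex

variable {E ι κ : Type*} [NormedAddCommGroup E] [NormedSpace ℝ E] {C : Set E} {x : E}

theorem add_fderivWithin_sub_le_of_convexOn {f : E → ℝ} {f' : E →L[ℝ] ℝ} (hf : ConvexOn ℝ C f)
    (hf' : HasFDerivWithinAt f f' C x) (hx : x ∈ C) {y : E} (hy : y ∈ C) :
    f x + f' (y - x) ≤ f y := by
  let line : ℝ →ᵃ[ℝ] E := AffineMap.lineMap x y
  have hline : HasDerivWithinAt (f ∘ line) (f' (y - x)) (line ⁻¹' C) 0 :=
    hf'.comp_hasDerivWithinAt_of_eq 0 AffineMap.hasDerivWithinAt_lineMap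
      (Set.mapsTo_preimage _ _) (by simp [line])
  have hslope := (hf.comp_affineMap line).le_slope_of_hasDerivWithinAt
    (by simpa [line] using hx) (by simpa [line] using hy) one_pos hline
  have hsub : f' (y - x) ≤ f y - f x := by simpa [slope_def_field, line] using hslope
  linarith

theorem le_of_linearization_nonneg {g : E → ℝ} {g' : E →L[ℝ] ℝ} {F : ι → E → ℝ}
    {F' : ι → E →L[ℝ] ℝ} (hg : ConvexOn ℝ C g) (hg' : HasFDerivWithinAt g g' C x)
    (hF : ∀ i, ConvexOn ℝ C (F i)) (hF' : ∀ i, HasFDerivWithinAt (F i) (F' i) C x) (hx : x ∈ C)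
    (h : ∀ d, (∀ i, F i x + F' i d ≤ 0) → 0 ≤ g' d) {z : E} (hz : z ∈ C) (hFz : ∀ i, F i z ≤ 0) :
    g x ≤ g z := by
  have hnonneg : 0 ≤ g' (z - x) := h (z - x) fun i =>
    (add_fderivWithin_sub_le_of_convexOn (hF i) (hF' i) hx hz).trans (hFz i)
  linarith [add_fderivWithin_sub_le_of_convexOn hg hg' hx hz]

theorem stmt_0_general [Fintype ι] [Fintype κ] {g : E → ℝ} {G : ι → E → ℝ} {H : κ → E → ℝ}
    {g' : E →L[ℝ] ℝ} {G' : ι → E →L[ℝ] ℝ} {H' : κ → E →L[ℝ] ℝ}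
    (hg : ConvexOn ℝ C g) (hg' : HasFDerivWithinAt g g' C x)
    (hG : ∀ i, ConvexOn ℝ C (G i)) (hG' : ∀ i, HasFDerivWithinAt (G i) (G' i) C x)
    (hH : ∀ j, ConvexOn ℝ C (H j)) (hH' : ∀ j, HasFDerivWithinAt (H j) (H' j) C x)
    (hx : x ∈ C) (hGx : ∀ i, G i x ≤ 0) (hHx : ∀ j, H j x = 0)
    (h : ∀ d, (∀ i, G i x + G' i d ≤ 0) → (∀ j, H' j d ≤ 0) → 0 ≤ g' d) :
    (∀ z ∈ C, (∀ i, G i z ≤ 0) → (∀ j, H j z ≤ 0) → g x ≤ g z) ∧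
    ∃ (u : ι → ℝ) (v : κ → ℝ), (∀ i, 0 ≤ u i) ∧ (∀ j, 0 ≤ v j) ∧
      g' + ∑ i, u i • G' i + ∑ j, v j • H' j = 0 ∧ ∀ i, u i * G i x = 0 := by
  let F : ι ⊕ κ → E → ℝ := Sum.elim G H
  let F' : ι ⊕ κ → E →L[ℝ] ℝ := Sum.elim G' H'
  have hFx : ∀ k, F k x ≤ 0 := Sum.forall.mpr ⟨hGx, fun j => (hHx j).le⟩
  have hcone (d : E) (hd : ∀ k, F k x + F' k d ≤ 0) : 0 ≤ g' d :=
    h d (fun i => hd (.inl i)) fun j => by simpa [F, F', hHx j] using hd (.inr j)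
  refine ⟨fun z hz hGz hHz => le_of_linearization_nonneg hg hg' (Sum.forall.mpr ⟨hG, hH⟩)
    (Sum.forall.mpr ⟨hG', hH'⟩) hx hcone hz (Sum.forall.mpr ⟨hGz, hHz⟩), ?_⟩
  obtain ⟨w, hw, hstationary, hslack⟩ :=
    exists_complementary_multipliers (a := fun k => (F' k).toLinearMap) (c := g') hFx hcone
  refine ⟨w ∘ Sum.inl, w ∘ Sum.inr, fun i => hw _, fun j => hw _, ?_, fun i => hslack (.inl i)⟩
  ext d
  simpa [F', add_assoc] using LinearMap.congr_fun hstationary d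

end Convex

/-- Theorem 1 (sufficient optimality via linearized subproblem) for the
constrained convex problem: minimize `g` over
`X = {z | ∀ i, G i z ≤ 0 ∧ ∀ j, H j z = 0}`. If `ds` minimizes
`d ↦ (fderiv ℝ g zs) d` over the cone
`T(zs) = {d | ∀ i, G i zs + (fderiv ℝ (G i) zs) d ≤ 0 ∧ ∀ j, (fderiv ℝ (H j) zs) d ≤ 0}`
and the optimal value is nonnegative, then `zs` is a global minimizer of `g` on `X`
and KKT multipliers `u ≥ 0`, `v ≥ 0` exist. -/
theorem stmt_0 {n s r : ℕ}
    (g : EuclideanSpace ℝ (Fin n) → ℝ)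
    (G : Fin s → EuclideanSpace ℝ (Fin n) → ℝ)
    (H : Fin r → EuclideanSpace ℝ (Fin n) → ℝ)
    (hg : ConvexOn ℝ Set.univ g) (hgd : Differentiable ℝ g)
    (hG : ∀ i, ConvexOn ℝ Set.univ (G i)) (hGd : ∀ i, Differentiable ℝ (G i))
    (hH : ∀ j, ConvexOn ℝ Set.univ (H j)) (hHd : ∀ j, Differentiable ℝ (H j))
    (X : Set (EuclideanSpace ℝ (Fin n)))
    (hX : X = {z | (∀ i, G i z ≤ 0) ∧ (∀ j, H j z = 0)})
    (zs : EuclideanSpace ℝ (Fin n)) (hzs : zs ∈ X)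
    (T : Set (EuclideanSpace ℝ (Fin n)))
    (hT : T = {d | (∀ i, G i zs + fderiv ℝ (G i) zs d ≤ 0) ∧
                   (∀ j, fderiv ℝ (H j) zs d ≤ 0)})
    (ds : EuclideanSpace ℝ (Fin n)) (hds : ds ∈ T)
    (hmin : ∀ d ∈ T, fderiv ℝ g zs ds ≤ fderiv ℝ g zs d)
    (hnonneg : 0 ≤ fderiv ℝ g zs ds) :
    (∀ z ∈ X, g zs ≤ g z) ∧
    ∃ (u : Fin s → ℝ) (v : Fin r → ℝ), (∀ i, 0 ≤ u i) ∧ (∀ j, 0 ≤ v j) ∧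
      (fderiv ℝ g zs + ∑ i, u i • fderiv ℝ (G i) zs
        + ∑ j, v j • fderiv ℝ (H j) zs = 0) ∧
      (∀ i, u i * G i zs = 0) := by
  subst hX hT
  obtain ⟨hmin_on, hmultipliers⟩ := stmt_0_general hg (hgd zs).hasFDerivAt.hasFDerivWithinAt
    hG (fun i => (hGd i zs).hasFDerivAt.hasFDerivWithinAt)
    hH (fun j => (hHd j zs).hasFDerivAt.hasFDerivWithinAt) (Set.mem_univ zs) hzs.1 hzs.2
    fun d hGd hHd => hnonneg.trans (hmin d ⟨hGd, hHd⟩)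
  exact ⟨fun z hz => hmin_on z (Set.mem_univ z) hz.1 fun j => (hz.2 j).le, hmultipliers⟩
end

section
/- Let z* ∈ X and assume z − z* ∈ T₀(z*) for every z ∈ X. Suppose there exists d* ∈ E minimizing d ↦ ∇g(z*)·d over T₀(z*) with ∇g(z*)·d* ≥ 0. Then (a) g(z*) ≤ g(z) for every z ∈ X, and (b) there exist u* ∈ ℝ^s with u* ≥ 0 and v* ∈ ℝ^r (not necessarily nonnegative) such that ∇g(z*) + Σᵢ uᵢ* ∇gᵢ(z*) + Σⱼ vⱼ* ∇hⱼ(z*) = 0 and uᵢ* gᵢ(z*) = 0 for every i = 1,…,s. -/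
/-!
Part (a) is the tangent inequality for convex functions. For part (b), the constraints
`gᵢ(z*) + ∇gᵢ(z*)·d ≤ 0` are homogenised with an extra variable `τ ≥ 0` into
`τ gᵢ(z*) + ∇gᵢ(z*)·d ≤ 0`, and Farkas' lemma writes `∇g(z*)` as a combination of the homogeneous
constraints. Comparing coefficients of `τ` shows `∑ᵢ uᵢ gᵢ(z*) ≥ 0`; since every term is
nonpositive, all of them vanish, which is complementary slackness.
-/

section Farkas

variable {𝕜 E ι κ : Type*} [Field 𝕜] [AddCommGroup E] [Module 𝕜 E]

/-- The projection of `E` onto the kernel of `f` along `y`, used to eliminate one generator in the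
proof of Farkas' lemma. It is only meant for `f y ≠ 0`; if `f y = 0`, it is the identity. -/
def kerProjectionAlong (f : Module.Dual 𝕜 E) (y : E) : E →ₗ[𝕜] E :=
  LinearMap.id - ((f y)⁻¹ • f).smulRight y

theorem apply_kerProjectionAlong (f φ : Module.Dual 𝕜 E) (y x : E) :
    φ (kerProjectionAlong f y x) = φ x - f x / f y * φ y := by
  simp [kerProjectionAlong, div_eq_inv_mul]

variable [LinearOrder 𝕜] [IsStrictOrderedRing 𝕜]

theorem exists_mem_hull_comp_eq {F : Type*} [AddCommGroup F] [Module 𝕜 F] (p : F →ₗ[𝕜] E)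
    {s : Set (Module.Dual 𝕜 E)} {b : Module.Dual 𝕜 F}
    (hb : b ∈ PointedCone.hull 𝕜 ((· ∘ₗ p) '' s)) :
    ∃ b' ∈ PointedCone.hull 𝕜 s, b' ∘ₗ p = b := by
  let pullback : Module.Dual 𝕜 E →ₗ[{t : 𝕜 // 0 ≤ t}] Module.Dual 𝕜 F :=
    (Module.Dual.transpose (R := 𝕜) p).restrictScalars _
  change b ∈ Submodule.span _ (pullback '' s) at hb
  rwa [← Submodule.map_span] at hb

theorem mem_hull_insert_of_comp_kerProjectionAlong_mem_hull {s : Set (Module.Dual 𝕜 E)}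
    {f b : Module.Dual 𝕜 E} {y : E} (hs : ∀ φ ∈ s, 0 ≤ φ y) (hfy : f y < 0) (hby : b y ≤ 0)
    (hb : b ∘ₗ kerProjectionAlong f y ∈
      PointedCone.hull 𝕜 ((· ∘ₗ kerProjectionAlong f y) '' s)) :
    b ∈ PointedCone.hull 𝕜 (insert f s) := by
  obtain ⟨b', hb', hcomp⟩ := exists_mem_hull_comp_eq _ hb
  have hy_dual : y ∈ PointedCone.dual .id (PointedCone.hull 𝕜 s : Set (Module.Dual 𝕜 E)) := by
    rw [PointedCone.dual_hull]
    exact fun φ hφ => hs φ hφ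
  have hb'y : 0 ≤ b' y := hy_dual hb'
  have hcoeff : 0 ≤ (b y - b' y) / f y :=
    div_nonneg_of_nonpos (sub_nonpos.2 (hby.trans hb'y)) hfy.le
  refine Submodule.mem_span_insert.2 ⟨⟨_, hcoeff⟩, b', hb', ?_⟩
  ext x
  have hx : b' x - f x / f y * b' y = b x - f x / f y * b y := by
    simpa only [LinearMap.comp_apply, apply_kerProjectionAlong] using LinearMap.congr_fun hcomp x
  change b x = (b y - b' y) / f y * f x + b' x
  linear_combination -hx

theorem mem_hull_image_of_forall_nonneg (S : Finset ι) (a : ι → Module.Dual 𝕜 E)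
    (b : Module.Dual 𝕜 E) (hab : ∀ x, (∀ i ∈ S, 0 ≤ a i x) → 0 ≤ b x) :
    b ∈ PointedCone.hull 𝕜 (a '' S) := by
  classical
  induction S using Finset.induction_on generalizing a b with
  | empty =>
    have hb : b = 0 := by
      ext x
      have h_neg : 0 ≤ b (-x) := hab (-x) (by simp)
      rw [map_neg] at h_neg
      exact le_antisymm (neg_nonneg.1 h_neg) (hab x (by simp))
    exact hb ▸ zero_mem _
  | insert k S _ ih =>
    rw [Finset.coe_insert, Set.image_insert_eq]
    by_cases hS : ∀ x, (∀ i ∈ S, 0 ≤ a i x) → 0 ≤ b x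
    · exact Submodule.span_mono (Set.subset_insert _ _) (ih a b hS)
    push Not at hS
    obtain ⟨y, hay, hby⟩ := hS
    have hky : a k y < 0 := by
      by_contra! hky
      exact hby.not_ge (hab y (Finset.forall_mem_insert _ _ _ |>.2 ⟨hky, hay⟩))
    refine mem_hull_insert_of_comp_kerProjectionAlong_mem_hull (Set.forall_mem_image.2 hay)
      hky hby.le ?_
    rw [Set.image_image]
    -- The projected point lies in `ker (a k)`, so the `k`-th inequality holds there for free.
    refine ih _ _ fun x hx => hab (kerProjectionAlong (a k) y x) ?_
    exact Finset.forall_mem_insert _ _ _ |>.2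
      ⟨by simp [apply_kerProjectionAlong, hky.ne], hx⟩

/-- **Farkas' lemma**. -/
theorem exists_nonneg_sum_smul_eq [Fintype ι] (a : ι → Module.Dual 𝕜 E)
    (b : Module.Dual 𝕜 E) (hab : ∀ x, (∀ i, 0 ≤ a i x) → 0 ≤ b x) :
    ∃ u : ι → 𝕜, (∀ i, 0 ≤ u i) ∧ ∑ i, u i • a i = b := by
  have hb : b ∈ PointedCone.hull 𝕜 (Set.range a) := by
    simpa using mem_hull_image_of_forall_nonneg Finset.univ a b (by simpa using hab)
  obtain ⟨u, hu⟩ := Submodule.mem_span_range_iff_exists_fun _ |>.1 hb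
  exact ⟨fun i => u i, fun i => (u i).2, hu⟩

theorem exists_nonneg_sum_smul_add_sum_smul_eq [Fintype ι] [Fintype κ]
    (a : ι → Module.Dual 𝕜 E) (c : κ → Module.Dual 𝕜 E) (b : Module.Dual 𝕜 E)
    (hab : ∀ x, (∀ i, 0 ≤ a i x) → (∀ j, c j x = 0) → 0 ≤ b x) :
    ∃ (u : ι → 𝕜) (v : κ → 𝕜), (∀ i, 0 ≤ u i) ∧ ∑ i, u i • a i + ∑ j, v j • c j = b := by
  let W : Submodule 𝕜 E := ⨅ j, LinearMap.ker (c j)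
  obtain ⟨u, hu, hsum⟩ := exists_nonneg_sum_smul_eq (fun i => (a i).domRestrict W)
    (b.domRestrict W) fun x hx => hab x hx ((Submodule.mem_iInf _).1 x.2)
  have hker : W ≤ LinearMap.ker (b - ∑ i, u i • a i) := fun x hx => by
    have hsum_x := LinearMap.congr_fun hsum ⟨x, hx⟩
    simp only [LinearMap.sum_apply, LinearMap.smul_apply, LinearMap.domRestrict_apply] at hsum_x
    simp [LinearMap.sum_apply, ← hsum_x]
  obtain ⟨v, hv⟩ := Submodule.mem_span_range_iff_exists_fun _ |>.1
    (mem_span_of_iInf_ker_le_ker hker)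
  exact ⟨u, v, hu, by rw [hv, add_sub_cancel]⟩

theorem apply_nonneg_of_forall_mul_add_nonpos {α : ι → 𝕜} (hα : ∀ i, α i ≤ 0)
    (a : ι → Module.Dual 𝕜 E) (c : κ → Module.Dual 𝕜 E) (b : Module.Dual 𝕜 E)
    (hab : ∀ x, (∀ i, α i + a i x ≤ 0) → (∀ j, c j x = 0) → 0 ≤ b x) {x : E} {τ : 𝕜}
    (hτ : 0 ≤ τ) (hax : ∀ i, α i * τ + a i x ≤ 0) (hcx : ∀ j, c j x = 0) : 0 ≤ b x := by
  -- Dividing by `τ + 1` rather than `τ` also covers `τ = 0`, because `α i ≤ 0`.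
  have hτ' : 0 < τ + 1 := add_pos_of_nonneg_of_pos hτ one_pos
  have hb : 0 ≤ b ((τ + 1)⁻¹ • x) := by
    refine hab _ (fun i => ?_) fun j => by rw [map_smul, hcx j, smul_zero]
    calc
      α i + a i ((τ + 1)⁻¹ • x) = (τ + 1)⁻¹ * (α i * τ + a i x + α i) := by
        rw [map_smul, smul_eq_mul]
        field_simp
        ring
      _ ≤ 0 := mul_nonpos_of_nonneg_of_nonpos (inv_nonneg.2 hτ'.le) (add_nonpos (hax i) (hα i))
  rw [map_smul, smul_eq_mul] at hb
  exact nonneg_of_mul_nonneg_right hb (inv_pos.2 hτ')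

theorem exists_nonneg_complementary_multipliers [Fintype ι] [Fintype κ] {α : ι → 𝕜}
    (hα : ∀ i, α i ≤ 0) (a : ι → Module.Dual 𝕜 E) (c : κ → Module.Dual 𝕜 E)
    (b : Module.Dual 𝕜 E)
    (hab : ∀ x, (∀ i, α i + a i x ≤ 0) → (∀ j, c j x = 0) → 0 ≤ b x) :
    ∃ (u : ι → 𝕜) (v : κ → 𝕜), (∀ i, 0 ≤ u i) ∧
      b + ∑ i, u i • a i + ∑ j, v j • c j = 0 ∧ ∀ i, u i * α i = 0 := by
  let fst := LinearMap.fst 𝕜 E 𝕜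
  let snd := LinearMap.snd 𝕜 E 𝕜
  obtain ⟨w, v, hw, hsum⟩ := exists_nonneg_sum_smul_add_sum_smul_eq
    (fun o : Option ι => o.elim snd fun i => -(a i ∘ₗ fst + α i • snd)) (fun j => c j ∘ₗ fst)
    (b ∘ₗ fst) fun y hy hcy =>
      apply_nonneg_of_forall_mul_add_nonpos hα a c b hab (τ := y.2) (hy none)
        (fun i => by simpa [fst, snd, add_comm] using neg_nonneg.1 (hy (some i))) hcy
  refine ⟨fun i => w (some i), fun j => -v j, fun i => hw _, ?_, ?_⟩
  · ext x
    have hx : ∑ j, v j * c j x - ∑ i, w (some i) * a i x = b x := by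
      simpa [fst, snd, Fintype.sum_option, LinearMap.sum_apply, neg_add_eq_sub] using
        LinearMap.congr_fun hsum (x, 0)
    simp only [LinearMap.add_apply, LinearMap.sum_apply, LinearMap.smul_apply, smul_eq_mul,
      neg_mul, Finset.sum_neg_distrib, LinearMap.zero_apply]
    linear_combination -hx
  · have hτ : w none = ∑ i, w (some i) * α i := by
      simpa [fst, snd, Fintype.sum_option, LinearMap.sum_apply, add_neg_eq_zero] using
        LinearMap.congr_fun hsum (0, 1)
    have hterm (i : ι) : w (some i) * α i ≤ 0 := mul_nonpos_of_nonneg_of_nonpos (hw _) (hα i)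
    have hzero : ∑ i, w (some i) * α i = 0 :=
      le_antisymm (Finset.sum_nonpos fun i _ => hterm i) (hτ ▸ hw none)
    exact fun i =>
      (Finset.sum_eq_zero_iff_of_nonpos fun i _ => hterm i).1 hzero i (Finset.mem_univ i)

end Farkas

section Convex

variable {E ι κ : Type*}

/-- The set `X` of points satisfying the constraints `G i ≤ 0` and `H j = 0`. -/
def feasibleSet (G : ι → E → ℝ) (H : κ → E → ℝ) : Set E :=
  {z | (∀ i, G i z ≤ 0) ∧ ∀ j, H j z = 0}

variable [NormedAddCommGroup E] [NormedSpace ℝ E]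

theorem add_fderiv_sub_le_of_convexOn {C : Set E} {f : E → ℝ} {x y : E} (hf : ConvexOn ℝ C f)
    (hx : x ∈ C) (hy : y ∈ C) (hfx : DifferentiableAt ℝ f x) :
    f x + fderiv ℝ f x (y - x) ≤ f y := by
  let line : ℝ →ᵃ[ℝ] E := AffineMap.lineMap x y
  have hconv : ConvexOn ℝ (line ⁻¹' C) (f ∘ line) := hf.comp_affineMap line
  have hderiv : HasDerivAt (f ∘ line) (fderiv ℝ f x (y - x)) 0 :=
    HasFDerivAt.comp_hasDerivAt (0 : ℝ) (by simpa [line] using hfx.hasFDerivAt)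
      AffineMap.hasDerivAt_lineMap
  have hslope : fderiv ℝ f x (y - x) ≤ slope (f ∘ line) 0 1 :=
    hconv.le_slope_of_hasDerivAt (by simpa [line] using hx) (by simpa [line] using hy)
      one_pos hderiv
  have hslope_eq : slope (f ∘ line) 0 1 = f y - f x := by simp [slope_def_field, line]
  linarith

/-- The set `T₀(z)` of directions satisfying the constraints linearised at `z`. The value `G i z` is
kept, so that inactive constraints bound the direction and the set need not be a cone. The values
`H j z` are dropped, as they vanish at a feasible point. -/
def linearizedDirections (G : ι → E → ℝ) (H : κ → E → ℝ) (z : E) : Set E :=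
  {d | (∀ i, G i z + fderiv ℝ (G i) z d ≤ 0) ∧ ∀ j, fderiv ℝ (H j) z d = 0}

theorem stmt_6_general [Fintype ι] [Fintype κ] {C : Set E} {g : E → ℝ} {G : ι → E → ℝ}
    {H : κ → E → ℝ} {z : E} (hg : ConvexOn ℝ C g) (hC : feasibleSet G H ⊆ C)
    (hgz : DifferentiableAt ℝ g z) (_hGz : ∀ i, DifferentiableAt ℝ (G i) z)
    (_hHz : ∀ j, DifferentiableAt ℝ (H j) z) (hz : z ∈ feasibleSet G H)
    (hdir : ∀ y ∈ feasibleSet G H, y - z ∈ linearizedDirections G H z)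
    (hnonneg : ∀ d ∈ linearizedDirections G H z, 0 ≤ fderiv ℝ g z d) :
    (∀ y ∈ feasibleSet G H, g z ≤ g y) ∧
    ∃ (u : ι → ℝ) (v : κ → ℝ), (∀ i, 0 ≤ u i) ∧
      (fderiv ℝ g z + ∑ i, u i • fderiv ℝ (G i) z + ∑ j, v j • fderiv ℝ (H j) z = 0) ∧
      (∀ i, u i * G i z = 0) := by
  constructor
  · intro y hy
    have htangent : g z + fderiv ℝ g z (y - z) ≤ g y :=
      add_fderiv_sub_le_of_convexOn hg (hC hz) (hC hy) hgz
    linarith [hnonneg _ (hdir y hy)]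
  · obtain ⟨u, v, hu, hstat, hcompl⟩ := exists_nonneg_complementary_multipliers hz.1
      (fun i => (fderiv ℝ (G i) z).toLinearMap) (fun j => (fderiv ℝ (H j) z).toLinearMap)
      (fderiv ℝ g z).toLinearMap fun d hGd hHd => hnonneg d ⟨hGd, hHd⟩
    refine ⟨u, v, hu, ContinuousLinearMap.coe_injective ?_, hcompl⟩
    simpa using hstat

end Convex

/-- Theorem 4: assume every feasible direction `z − zs` (for `z ∈ X`) lies in the
cone `T₀(zs)`. If `ds` minimizes `d ↦ ∇g(zs)·d` over `T₀(zs)` with nonnegative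
optimal value, then `zs` is a global minimizer of `g` over `X` and KKT
multipliers `u ≥ 0`, `v ∈ ℝ^r` exist. -/
theorem stmt_6 {n s r : ℕ}
    (g : EuclideanSpace ℝ (Fin n) → ℝ)
    (G : Fin s → EuclideanSpace ℝ (Fin n) → ℝ)
    (H : Fin r → EuclideanSpace ℝ (Fin n) → ℝ)
    (hg : ConvexOn ℝ Set.univ g) (hgd : Differentiable ℝ g)
    (hG : ∀ i, ConvexOn ℝ Set.univ (G i)) (hGd : ∀ i, Differentiable ℝ (G i))
    (hH : ∀ j, ConvexOn ℝ Set.univ (H j)) (hHd : ∀ j, Differentiable ℝ (H j))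
    (X : Set (EuclideanSpace ℝ (Fin n)))
    (hX : X = {z | (∀ i, G i z ≤ 0) ∧ (∀ j, H j z = 0)})
    (zs : EuclideanSpace ℝ (Fin n)) (hzs : zs ∈ X)
    (T₀ : Set (EuclideanSpace ℝ (Fin n)))
    (hT₀ : T₀ = {d | (∀ i, G i zs + fderiv ℝ (G i) zs d ≤ 0) ∧
                     (∀ j, fderiv ℝ (H j) zs d = 0)})
    (hdir : ∀ z ∈ X, (z - zs) ∈ T₀)
    (ds : EuclideanSpace ℝ (Fin n)) (hds : ds ∈ T₀)
    (hmin : ∀ d ∈ T₀, fderiv ℝ g zs ds ≤ fderiv ℝ g zs d)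
    (hnonneg : 0 ≤ fderiv ℝ g zs ds) :
    (∀ z ∈ X, g zs ≤ g z) ∧
    ∃ (u : Fin s → ℝ) (v : Fin r → ℝ), (∀ i, 0 ≤ u i) ∧
      (fderiv ℝ g zs + ∑ i, u i • fderiv ℝ (G i) zs
        + ∑ j, v j • fderiv ℝ (H j) zs = 0) ∧
      (∀ i, u i * G i zs = 0) := by
  subst hX hT₀
  exact stmt_6_general hg (Set.subset_univ _) (hgd zs) (fun i => hGd i zs) (fun j => hHd j zs)
    hzs hdir fun d hd => hnonneg.trans (hmin d hd)
end

section
/- Let z* ∈ X. There exists d* ∈ E minimizing d ↦ ∇g(z*)·d over T₀(z*) with ∇g(z*)·d* ≥ 0 if and only if there exist u* ∈ ℝ^s with u* ≥ 0 and v* ∈ ℝ^r (not necessarily nonnegative) such that ∇g(z*) + Σᵢ uᵢ* ∇gᵢ(z*) + Σⱼ vⱼ* ∇hⱼ(z*) = 0 and uᵢ* gᵢ(z*) = 0 for every i = 1,…,s. -/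
/-!
Stationarity with complementary slackness is the dual certificate of the linear program
`min f d` over the linearized feasible set. That set contains `0`, where `f` vanishes, so a
minimizer with nonnegative value exists exactly when `f` is nonnegative on the whole set. The
affine Farkas lemma turns this nonnegativity into multipliers; its bound on the constant terms,
a sum of products of one sign, forces every product `u i * c i` to vanish.
-/

open Module (Dual)

section OrderedRing

variable {R V ι κ : Type*} [CommRing R] [PartialOrder R] [AddCommGroup V] [Module R V]

/-- The set `T₀` of directions satisfying the linearized constraints, where `c i` and `a i` stand
for the value and the derivative of the `i`-th inequality constraint at the base point and `b j`
for the derivative of the `j`-th equality constraint. -/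
def linearizedFeasibleSet (c : ι → R) (a : ι → Dual R V) (b : κ → Dual R V) : Set V :=
  {d | (∀ i, c i + a i d ≤ 0) ∧ ∀ j, b j d = 0}

variable {c : ι → R} {a : ι → Dual R V} {b : κ → Dual R V} {f : Dual R V}

theorem zero_mem_linearizedFeasibleSet (hc : ∀ i, c i ≤ 0) :
    (0 : V) ∈ linearizedFeasibleSet c a b :=
  ⟨by simpa using hc, by simp⟩

theorem exists_minimizer_nonneg_iff_forall_nonneg (hc : ∀ i, c i ≤ 0) :
    (∃ ds ∈ linearizedFeasibleSet c a b,
      (∀ d ∈ linearizedFeasibleSet c a b, f ds ≤ f d) ∧ 0 ≤ f ds) ↔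
    ∀ d ∈ linearizedFeasibleSet c a b, 0 ≤ f d :=
  ⟨fun ⟨_, _, hmin, hnonneg⟩ d hd => hnonneg.trans (hmin d hd),
    fun h => ⟨0, zero_mem_linearizedFeasibleSet hc, by simpa using h, by simp⟩⟩

theorem nonneg_of_multipliers [IsOrderedRing R] [Fintype ι] [Fintype κ]
    {u : ι → R} {v : κ → R} (hu : ∀ i, 0 ≤ u i)
    (hstat : f + ∑ i, u i • a i + ∑ j, v j • b j = 0) (hslack : ∀ i, u i * c i = 0)
    {d : V} (hd : d ∈ linearizedFeasibleSet c a b) : 0 ≤ f d := by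
  have hineq : ∑ i, u i * a i d ≤ 0 := Finset.sum_nonpos fun i _ => by
    simpa [mul_add, hslack i] using mul_nonpos_of_nonneg_of_nonpos (hu i) (hd.1 i)
  have hfd : f d + ∑ i, u i * a i d = 0 := by
    simpa [hd.2] using LinearMap.congr_fun hstat d
  rw [eq_neg_of_add_eq_zero_left hfd]
  exact neg_nonneg.2 hineq

theorem mem_hull_insert_of_sub_smul_mem_hull [IsOrderedRing R] {s : Set (Dual R V)}
    {φ f : Dual R V} {z : V} (hs : ∀ ψ ∈ s, ψ z ≤ 0) (hfz : 0 ≤ f z)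
    (hf : f - f z • φ ∈ PointedCone.hull R ((fun ψ => ψ - ψ z • φ) '' s)) :
    f ∈ PointedCone.hull R (insert φ s) := by
  have hφ {r : R} (hr : 0 ≤ r) : r • φ ∈ PointedCone.hull R (insert φ s) :=
    PointedCone.smul_mem _ hr (PointedCone.subset_hull (Set.mem_insert φ s))
  have hproj : PointedCone.hull R ((fun ψ => ψ - ψ z • φ) '' s) ≤
      PointedCone.hull R (insert φ s) := by
    rw [Submodule.span_le]
    rintro _ ⟨ψ, hψ, rfl⟩
    have hsum := add_mem (PointedCone.subset_hull (Set.mem_insert_of_mem φ hψ))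
      (hφ (neg_nonneg.2 (hs ψ hψ)))
    rwa [neg_smul (ψ z) φ, ← sub_eq_add_neg] at hsum
  simpa only [sub_add_cancel] using add_mem (hproj hf) (hφ hfz)

end OrderedRing

section OrderedField

variable {K V ι κ : Type*} [Field K] [LinearOrder K] [IsStrictOrderedRing K]
  [AddCommGroup V] [Module K V]

-- Induction by Fourier–Motzkin elimination: if `a k` is needed, some `z` with `a k z = 1` satisfies
-- the other constraints and `0 < f z`, and `x ↦ x - a k x • z` projects the problem to `ker (a k)`.
theorem farkas_mem_hull_image (t : Finset ι) (a : ι → Dual K V) (f : Dual K V)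
    (h : ∀ x, (∀ i ∈ t, a i x ≤ 0) → f x ≤ 0) : f ∈ PointedCone.hull K (a '' t) := by
  classical
  induction t using Finset.induction_on generalizing a f with
  | empty =>
    have hf : f = 0 := LinearMap.ext fun x =>
      le_antisymm (h x (by simp)) (by simpa using h (-x) (by simp))
    exact hf ▸ zero_mem _
  | insert k t _ ih =>
    simp only [Finset.forall_mem_insert] at h
    rw [Finset.coe_insert, Set.image_insert_eq]
    by_cases hredundant : ∀ x, (∀ i ∈ t, a i x ≤ 0) → f x ≤ 0
    · exact Submodule.span_mono (Set.subset_insert _ _) (ih a f hredundant)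
    obtain ⟨y, hy, hfy⟩ : ∃ y, (∀ i ∈ t, a i y ≤ 0) ∧ 0 < f y := by
      simpa only [not_forall, exists_prop, not_le] using hredundant
    have hky : 0 < a k y := not_le.1 fun hk => (h y ⟨hk, hy⟩).not_gt hfy
    obtain ⟨z, hz, hfz, hkz⟩ : ∃ z, (∀ i ∈ t, a i z ≤ 0) ∧ 0 < f z ∧ a k z = 1 :=
      ⟨(a k y)⁻¹ • y,
        fun i hi => by
          simpa using mul_nonpos_of_nonneg_of_nonpos (inv_pos.2 hky).le (hy i hi),
        by simpa using mul_pos (inv_pos.2 hky) hfy,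
        by simp [hky.ne']⟩
    have heval (ψ : Dual K V) (x : V) : ψ (x - a k x • z) = (ψ - ψ z • a k) x := by
      simp [mul_comm]
    refine mem_hull_insert_of_sub_smul_mem_hull (Set.forall_mem_image.2 hz) hfz.le ?_
    rw [Set.image_image]
    refine ih _ _ fun x hx => ?_
    rw [← heval]
    exact h _ ⟨by simp [hkz], fun i hi => (heval (a i) x).trans_le (hx i hi)⟩

theorem farkas_exists_nonneg_eq_sum_smul [Fintype ι] {a : ι → Dual K V}
    {f : Dual K V} (h : ∀ x, (∀ i, a i x ≤ 0) → f x ≤ 0) :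
    ∃ u : ι → K, (∀ i, 0 ≤ u i) ∧ f = ∑ i, u i • a i := by
  have hf : f ∈ PointedCone.hull K (Set.range a) := by
    simpa using farkas_mem_hull_image Finset.univ a f (by simpa using h)
  obtain ⟨u, rfl⟩ := (Submodule.mem_span_range_iff_exists_fun _).1 hf
  exact ⟨fun i => u i, fun i => (u i).2, rfl⟩

theorem apply_nonpos_of_recession_direction {a : ι → Dual K V} {f : Dual K V} {c : ι → K} {δ : K}
    (hne : ∃ x, ∀ i, a i x ≤ c i) (h : ∀ x, (∀ i, a i x ≤ c i) → f x ≤ δ)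
    {d : V} (hd : ∀ i, a i d ≤ 0) : f d ≤ 0 := by
  obtain ⟨x, hx⟩ := hne
  by_contra! hfd
  have hray {r : K} (hr : 0 ≤ r) : f x + r * f d ≤ δ := by
    simpa using h (x + r • d) fun i => by
      simpa using add_le_of_le_of_nonpos (hx i) (mul_nonpos_of_nonneg_of_nonpos hr (hd i))
  have hr : 0 ≤ (δ - f x) / f d := div_nonneg (sub_nonneg.2 (h x hx)) hfd.le
  have hfar := hray (add_nonneg hr zero_le_one)
  rw [add_mul, div_mul_cancel₀ _ hfd.ne'] at hfar
  linarith

theorem apply_le_mul_of_forall_apply_le {a : ι → Dual K V} {f : Dual K V} {c : ι → K} {δ : K}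
    (hne : ∃ x, ∀ i, a i x ≤ c i) (h : ∀ x, (∀ i, a i x ≤ c i) → f x ≤ δ)
    {r : K} (hr : 0 ≤ r) {d : V} (hd : ∀ i, a i d ≤ c i * r) : f d ≤ δ * r := by
  rcases hr.eq_or_lt with rfl | hr
  · simpa using apply_nonpos_of_recession_direction hne h (by simpa using hd)
  · have hscaled := h (r⁻¹ • d) fun i => by simpa using (inv_mul_le_iff₀' hr).2 (hd i)
    exact (inv_mul_le_iff₀' hr).1 (by simpa using hscaled)

-- Farkas' lemma on `V × K`, where the bounds become linear in an extra coordinate `r ≥ 0`.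
theorem affine_farkas_inequalities [Fintype ι] {a : ι → Dual K V} {f : Dual K V}
    {c : ι → K} {δ : K} (hne : ∃ x, ∀ i, a i x ≤ c i) (h : ∀ x, (∀ i, a i x ≤ c i) → f x ≤ δ) :
    ∃ u : ι → K, (∀ i, 0 ≤ u i) ∧ f = ∑ i, u i • a i ∧ ∑ i, u i * c i ≤ δ := by
  let homogenize (φ : Dual K V) (γ : K) : Dual K (V × K) := φ.coprod (-γ • LinearMap.id)
  obtain ⟨u, hu, hfu⟩ := farkas_exists_nonneg_eq_sum_smul
    (a := fun i : Option ι => i.elim (homogenize 0 1) fun i => homogenize (a i) (c i))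
    (f := homogenize f δ) fun ⟨d, r⟩ hdr => by
      simp only [Option.forall, Option.elim, homogenize, LinearMap.coprod_apply,
        LinearMap.smul_apply, LinearMap.id_apply, LinearMap.zero_apply, smul_eq_mul,
        neg_mul, one_mul, ← sub_eq_add_neg, sub_nonpos] at hdr ⊢
      exact apply_le_mul_of_forall_apply_le hne h hdr.1 hdr.2
  rw [Fintype.sum_option] at hfu
  refine ⟨fun i => u (some i), fun i => hu _, LinearMap.ext fun d => ?_, ?_⟩
  · simpa [homogenize] using LinearMap.congr_fun hfu (d, 0)
  · have hconst : δ = u none + ∑ i, u (some i) * c i := by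
      simpa [homogenize, ← neg_add_rev, add_comm] using LinearMap.congr_fun hfu (0, 1)
    exact hconst ▸ le_add_of_nonneg_left (hu none)

theorem affine_farkas_inequalities_equalities [Fintype ι] [Fintype κ]
    {a : ι → Dual K V} {b : κ → Dual K V} {f : Dual K V} {c : ι → K} {e : κ → K} {δ : K}
    (hne : ∃ x, (∀ i, a i x ≤ c i) ∧ ∀ j, b j x = e j)
    (h : ∀ x, (∀ i, a i x ≤ c i) → (∀ j, b j x = e j) → f x ≤ δ) :
    ∃ (u : ι → K) (v : κ → K), (∀ i, 0 ≤ u i) ∧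
      f = ∑ i, u i • a i + ∑ j, v j • b j ∧ ∑ i, u i * c i + ∑ j, v j * e j ≤ δ := by
  let A : ι ⊕ κ ⊕ κ → Dual K V := Sum.elim a (Sum.elim b (-b))
  let C : ι ⊕ κ ⊕ κ → K := Sum.elim c (Sum.elim e (-e))
  have hsplit (x : V) : (∀ i, A i x ≤ C i) ↔ (∀ i, a i x ≤ c i) ∧ ∀ j, b j x = e j := by
    simp [A, C, Sum.forall, le_antisymm_iff, forall_and]
  obtain ⟨w, hw, hf, hδ⟩ := affine_farkas_inequalities
    (hne.imp fun x => (hsplit x).2) fun x hx => h x ((hsplit x).1 hx).1 ((hsplit x).1 hx).2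
  refine ⟨fun i => w (.inl i), fun j => w (.inr (.inl j)) - w (.inr (.inr j)),
    fun i => hw _, ?_, ?_⟩
  · rw [hf]
    simp only [A, Fintype.sum_sum_type, Sum.elim_inl, Sum.elim_inr, Pi.neg_apply, smul_neg,
      ← Finset.sum_add_distrib]
    congr! 2 with j
    module
  · simpa [C, sub_mul, Finset.sum_sub_distrib, ← sub_eq_add_neg] using hδ

variable [Fintype ι] [Fintype κ] {c : ι → K} {a : ι → Dual K V} {b : κ → Dual K V} {f : Dual K V}

theorem exists_multipliers_of_forall_nonneg (hc : ∀ i, c i ≤ 0)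
    (h : ∀ d ∈ linearizedFeasibleSet c a b, 0 ≤ f d) :
    ∃ (u : ι → K) (v : κ → K), (∀ i, 0 ≤ u i) ∧
      f + ∑ i, u i • a i + ∑ j, v j • b j = 0 ∧ ∀ i, u i * c i = 0 := by
  obtain ⟨u, v, hu, hf, hsum⟩ := affine_farkas_inequalities_equalities
    (a := a) (b := b) (c := -c) (e := 0) (f := -f) (δ := 0)
    ⟨0, by simpa using hc, by simp⟩
    fun d hd hd' => neg_nonpos.2 (h d ⟨fun i => le_neg_iff_add_nonpos_left.1 (hd i), hd'⟩)
  have hterm (i : ι) : u i * c i ≤ 0 := mul_nonpos_of_nonneg_of_nonpos (hu i) (hc i)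
  have hsum_eq : ∑ i, u i * c i = 0 :=
    le_antisymm (Finset.sum_nonpos fun i _ => hterm i) (by simpa using hsum)
  refine ⟨u, v, hu, ?_, fun i => ?_⟩
  · rw [add_assoc, ← hf, add_neg_cancel]
  · exact (Finset.sum_eq_zero_iff_of_nonpos fun i _ => hterm i).1 hsum_eq i (Finset.mem_univ i)

theorem stmt_8_general (hc : ∀ i, c i ≤ 0) :
    (∃ ds ∈ linearizedFeasibleSet c a b,
      (∀ d ∈ linearizedFeasibleSet c a b, f ds ≤ f d) ∧ 0 ≤ f ds) ↔
    ∃ (u : ι → K) (v : κ → K), (∀ i, 0 ≤ u i) ∧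
      f + ∑ i, u i • a i + ∑ j, v j • b j = 0 ∧ ∀ i, u i * c i = 0 :=
  (exists_minimizer_nonneg_iff_forall_nonneg hc).trans
    ⟨exists_multipliers_of_forall_nonneg hc,
      fun ⟨_, _, hu, hstat, hslack⟩ _ hd => nonneg_of_multipliers hu hstat hslack hd⟩

end OrderedField

/-- Theorem 6: for a feasible point `zs`, the linearized subproblem over `T₀(zs)`
has a minimizer with nonnegative optimal value if and only if KKT multipliers
`u ≥ 0`, `v ∈ ℝ^r` (not necessarily nonnegative) exist. -/
theorem stmt_8 {n s r : ℕ}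
    (g : EuclideanSpace ℝ (Fin n) → ℝ)
    (G : Fin s → EuclideanSpace ℝ (Fin n) → ℝ)
    (H : Fin r → EuclideanSpace ℝ (Fin n) → ℝ)
    (hg : ConvexOn ℝ Set.univ g) (hgd : Differentiable ℝ g)
    (hG : ∀ i, ConvexOn ℝ Set.univ (G i)) (hGd : ∀ i, Differentiable ℝ (G i))
    (hH : ∀ j, ConvexOn ℝ Set.univ (H j)) (hHd : ∀ j, Differentiable ℝ (H j))
    (X : Set (EuclideanSpace ℝ (Fin n)))
    (hX : X = {z | (∀ i, G i z ≤ 0) ∧ (∀ j, H j z = 0)})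
    (zs : EuclideanSpace ℝ (Fin n)) (hzs : zs ∈ X)
    (T₀ : Set (EuclideanSpace ℝ (Fin n)))
    (hT₀ : T₀ = {d | (∀ i, G i zs + fderiv ℝ (G i) zs d ≤ 0) ∧
                     (∀ j, fderiv ℝ (H j) zs d = 0)}) :
    (∃ ds ∈ T₀, (∀ d ∈ T₀, fderiv ℝ g zs ds ≤ fderiv ℝ g zs d) ∧
        0 ≤ fderiv ℝ g zs ds) ↔
    (∃ (u : Fin s → ℝ) (v : Fin r → ℝ), (∀ i, 0 ≤ u i) ∧
      (fderiv ℝ g zs + ∑ i, u i • fderiv ℝ (G i) zs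
        + ∑ j, v j • fderiv ℝ (H j) zs = 0) ∧
      (∀ i, u i * G i zs = 0)) := by
  subst hX hT₀
  simpa only [← ContinuousLinearMap.coe_inj, ContinuousLinearMap.toLinearMap_add,
    ContinuousLinearMap.toLinearMap_sum, ContinuousLinearMap.toLinearMap_smul,
    ContinuousLinearMap.toLinearMap_zero] using!
    stmt_8_general (f := (fderiv ℝ g zs).toLinearMap)
      (a := fun i => (fderiv ℝ (G i) zs).toLinearMap)
      (b := fun j => (fderiv ℝ (H j) zs).toLinearMap) hzs.1
end

section
/- Let g, g₁,…,g_s, h₁,…,h_r : E → ℝ be continuous, and assume every level set S(π, g) = {z ∈ E : g(z) ≤ π} (π ∈ ℝ) is bounded. Let (zᵏ) be a sequence in E and (ρ_k) a sequence of positive reals with ρ_k → +∞, and suppose the sequence H_k = g(zᵏ) + ρ_k Σᵢ (max{gᵢ(zᵏ), 0})² + ρ_k Σⱼ hⱼ(zᵏ)² is bounded. Then the sequence (zᵏ) is bounded, and every cluster point z* of (zᵏ) is feasible: gᵢ(z*) ≤ 0 for all i = 1,…,s and hⱼ(z*) = 0 for all j = 1,…,r. -/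
/-!
Dropping the nonnegative penalty term from a bounded penalized value bounds `g (z k)`, so the
iterates stay in a single level set of `g`. Near a cluster point with positive penalty `c`, lower
semicontinuity would keep `g` bounded below and the penalty above `c / 2`; the penalized values
would then be unbounded as `ρ k → ∞`. Hence the penalty vanishes at every cluster point, which is
exactly feasibility.
-/

open Filter

section PenalizedValues

variable {α E : Type*} {g p : E → ℝ} {z : α → E} {ρ : α → ℝ} {M : ℝ}

theorem isBounded_range_of_penalized_le [Bornology E]
    (hlev : Bornology.IsBounded {x | g x ≤ M}) (hρ : ∀ k, 0 ≤ ρ k) (hp : ∀ k, 0 ≤ p (z k))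
    (hM : ∀ k, g (z k) + ρ k * p (z k) ≤ M) : Bornology.IsBounded (Set.range z) :=
  hlev.subset <| Set.range_subset_iff.2 fun k =>
    (le_add_of_nonneg_right (mul_nonneg (hρ k) (hp k))).trans (hM k)

theorem penalty_nonpos_of_mapClusterPt [TopologicalSpace E] {l : Filter α} {x : E}
    (hx : MapClusterPt x l z) (hg : LowerSemicontinuousAt g x) (hp : LowerSemicontinuousAt p x)
    (hρ : Tendsto ρ l atTop) (hM : ∀ᶠ k in l, g (z k) + ρ k * p (z k) ≤ M) : p x ≤ 0 := by
  by_contra! hpos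
  have hnear : ∃ᶠ k in l, g x - 1 < g (z k) ∧ p x / 2 < p (z k) :=
    hx.frequently ((hg _ (sub_one_lt _)).and (hp _ (half_lt_self hpos)))
  have hlarge : ∀ᶠ k in l, M - (g x - 1) < ρ k * (p x / 2) :=
    (hρ.atTop_mul_const (half_pos hpos)).eventually_gt_atTop _
  obtain ⟨k, ⟨hgk, hpk⟩, hk, hρk, hMk⟩ :=
    (hnear.and_eventually (hlarge.and ((hρ.eventually_ge_atTop 0).and hM))).exists
  have hpenalty : ρ k * (p x / 2) ≤ ρ k * p (z k) := mul_le_mul_of_nonneg_left hpk.le hρk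
  linarith

end PenalizedValues

section QuadraticPenalty

variable {E ι κ : Type*} [Fintype ι] [Fintype κ] {G : ι → E → ℝ} {H : κ → E → ℝ}

/-- The quadratic penalty for violating the constraints `G i ≤ 0` and `H j = 0`, without the
penalty parameter. -/
def quadraticPenalty (G : ι → E → ℝ) (H : κ → E → ℝ) (x : E) : ℝ :=
  ∑ i, (max (G i x) 0) ^ 2 + ∑ j, (H j x) ^ 2

theorem quadraticPenalty_nonneg (G : ι → E → ℝ) (H : κ → E → ℝ) (x : E) :
    0 ≤ quadraticPenalty G H x := by
  unfold quadraticPenalty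
  positivity

theorem quadraticPenalty_eq_zero_iff {x : E} :
    quadraticPenalty G H x = 0 ↔ (∀ i, G i x ≤ 0) ∧ ∀ j, H j x = 0 := by
  have hG : 0 ≤ ∑ i, (max (G i x) 0) ^ 2 := Finset.sum_nonneg fun _ _ => sq_nonneg _
  have hH : 0 ≤ ∑ j, (H j x) ^ 2 := Finset.sum_nonneg fun _ _ => sq_nonneg _
  rw [quadraticPenalty, add_eq_zero_iff_of_nonneg hG hH,
    Finset.sum_eq_zero_iff_of_nonneg fun _ _ => sq_nonneg _,
    Finset.sum_eq_zero_iff_of_nonneg fun _ _ => sq_nonneg _]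
  simp only [Finset.mem_univ, true_imp_iff, sq_eq_zero_iff, max_eq_right_iff]

theorem lowerSemicontinuous_quadraticPenalty [TopologicalSpace E]
    (hG : ∀ i, LowerSemicontinuous (G i)) (hH : ∀ j, Continuous (H j)) :
    LowerSemicontinuous (quadraticPenalty G H) := by
  have hmono : Monotone fun t : ℝ => (max t 0) ^ 2 := fun _ _ hst =>
    pow_le_pow_left₀ (le_max_right _ _) (max_le_max_right 0 hst) 2
  have hineq : LowerSemicontinuous fun x => ∑ i, (max (G i x) 0) ^ 2 :=
    lowerSemicontinuous_sum fun i _ =>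
      Continuous.comp_lowerSemicontinuous (by fun_prop) (hG i) hmono
  have heq : Continuous fun x => ∑ j, (H j x) ^ 2 := by fun_prop
  exact hineq.add heq.lowerSemicontinuous

end QuadraticPenalty

theorem stmt_19_general {α E ι κ : Type*} [TopologicalSpace E] [Bornology E]
    [Fintype ι] [Fintype κ] {g : E → ℝ} {G : ι → E → ℝ} {H : κ → E → ℝ}
    (hg : LowerSemicontinuous g) (hG : ∀ i, LowerSemicontinuous (G i))
    (hH : ∀ j, Continuous (H j)) {M : ℝ} (hlev : Bornology.IsBounded {x | g x ≤ M})
    {l : Filter α} {z : α → E} {ρ : α → ℝ} (hρ : ∀ k, 0 ≤ ρ k) (hρtop : Tendsto ρ l atTop)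
    (hM : ∀ k, g (z k) + ρ k * quadraticPenalty G H (z k) ≤ M) :
    Bornology.IsBounded (Set.range z) ∧
      ∀ x, MapClusterPt x l z → (∀ i, G i x ≤ 0) ∧ ∀ j, H j x = 0 := by
  refine ⟨isBounded_range_of_penalized_le hlev hρ
    (fun k => quadraticPenalty_nonneg G H (z k)) hM, fun x hx => ?_⟩
  have hpenalty : quadraticPenalty G H x ≤ 0 :=
    penalty_nonpos_of_mapClusterPt hx (hg x) (lowerSemicontinuous_quadraticPenalty hG hH x)
      hρtop (.of_forall hM)
  exact quadraticPenalty_eq_zero_iff.1 (hpenalty.antisymm (quadraticPenalty_nonneg G H x))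

/-- Theorem 9(ii), first part: if every level set of `g` is bounded, the penalty
parameters `ρ k → ∞`, and the penalized values
`H_k = g(zᵏ) + ρ_k Σᵢ (max{gᵢ(zᵏ),0})² + ρ_k Σⱼ hⱼ(zᵏ)²` are bounded, then the
iterate sequence `(zᵏ)` is bounded and every cluster point is feasible. -/
theorem stmt_19 {n s r : ℕ}
    (g : EuclideanSpace ℝ (Fin n) → ℝ)
    (G : Fin s → EuclideanSpace ℝ (Fin n) → ℝ)
    (H : Fin r → EuclideanSpace ℝ (Fin n) → ℝ)
    (hg : Continuous g) (hG : ∀ i, Continuous (G i)) (hH : ∀ j, Continuous (H j))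
    (hlev : ∀ π : ℝ, Bornology.IsBounded {z | g z ≤ π})
    (zk : ℕ → EuclideanSpace ℝ (Fin n))
    (ρ : ℕ → ℝ) (hρ : ∀ k, 0 < ρ k)
    (hρtop : Filter.Tendsto ρ Filter.atTop Filter.atTop)
    (Hk : ℕ → ℝ)
    (hHk : ∀ k, Hk k = g (zk k) + ρ k * ∑ i, (max (G i (zk k)) 0) ^ 2
        + ρ k * ∑ j, (H j (zk k)) ^ 2)
    (hbdd : ∃ M : ℝ, ∀ k, |Hk k| ≤ M) :
    Bornology.IsBounded (Set.range zk) ∧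
    ∀ zstar : EuclideanSpace ℝ (Fin n),
      MapClusterPt zstar Filter.atTop zk →
      (∀ i, G i zstar ≤ 0) ∧ (∀ j, H j zstar = 0) := by
  obtain ⟨M, hM⟩ := hbdd
  refine stmt_19_general hg.lowerSemicontinuous (fun i => (hG i).lowerSemicontinuous) hH (hlev M)
    (fun k => (hρ k).le) hρtop fun k => ?_
  rw [quadraticPenalty, mul_add, ← add_assoc, ← hHk]
  exact (le_abs_self _).trans (hM k)
end
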